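/- Let 𝓐 be a locally finite hyperplane arrangement in ℝ^n, let α : A = C_1 → C_2 → ⋯ → C_t = B be a reduced positive path between chambers A and B, and let C be a chamber adjacent to B. If the positive path from A to C obtained by appending to α the step B → C is not reduced, then there exists a reduced positive path γ from A to C such that the positive path from A to B obtained by appending to γ the step C → B is reduced. -/

import Mathlib

open Set

/-- A subset of `ℝ^n` is an (affine) hyperplane if it is of the form `{x : f x = c}` for a
nonzero linear functional `f` and a real constant `c`. -/
def IsAffineHyperplane {n : ℕ} (H : Set (Fin n → ℝ)) : Prop :=
  ∃ (f : (Fin n → ℝ) →ₗ[ℝ] ℝ) (c : ℝ), f ≠ 0 ∧ H = {x | f x = c}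

/-- A locally finite hyperplane arrangement in `ℝ^n`: a set of affine hyperplanes such that
every point has a neighbourhood meeting only finitely many members. -/
def IsLocallyFiniteArrangement {n : ℕ} (A : Set (Set (Fin n → ℝ))) : Prop :=
  (∀ H ∈ A, IsAffineHyperplane H) ∧
  ∀ x : Fin n → ℝ, ∃ U ∈ nhds x, {H | H ∈ A ∧ (H ∩ U).Nonempty}.Finite

/-- A chamber of the arrangement `A`: a connected component of the complement of the union
of the hyperplanes of `A`. -/
def IsChamber {n : ℕ} (A : Set (Set (Fin n → ℝ))) (C : Set (Fin n → ℝ)) : Prop :=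
  ∃ x ∈ (⋃₀ A)ᶜ, C = connectedComponentIn (⋃₀ A)ᶜ x

/-- A hyperplane `H` separates the chambers `C` and `C'` if they lie in different connected
components of the complement of `H`, i.e. on opposite sides of `H`. -/
def Separates {n : ℕ} (H C C' : Set (Fin n → ℝ)) : Prop :=
  ¬ ∃ x ∈ C, ∃ y ∈ C', connectedComponentIn Hᶜ x = connectedComponentIn Hᶜ y

/-- Two chambers of `A` are adjacent if exactly one hyperplane of `A` separates them. -/
def Adjacent {n : ℕ} (A : Set (Set (Fin n → ℝ))) (C C' : Set (Fin n → ℝ)) : Prop :=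
  IsChamber A C ∧ IsChamber A C' ∧ ∃! H, H ∈ A ∧ Separates H C C'

/-- `C 0, C 1, …, C t` is a positive path of chambers of `A` (with `t` steps): each `C j` is a
chamber and consecutive chambers are adjacent. -/
def IsPositivePath {n : ℕ} (A : Set (Set (Fin n → ℝ))) (t : ℕ) (C : ℕ → Set (Fin n → ℝ)) :
    Prop :=
  (∀ j, j ≤ t → IsChamber A (C j)) ∧ ∀ j, j < t → Adjacent A (C j) (C (j + 1))

/-- A positive path is reduced if no hyperplane of `A` is crossed at two distinct steps. -/
def IsReducedPath {n : ℕ} (A : Set (Set (Fin n → ℝ))) (t : ℕ) (C : ℕ → Set (Fin n → ℝ)) :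
    Prop :=
  IsPositivePath A t C ∧
  ∀ j k, j < t → k < t → j ≠ k →
    ∀ G ∈ A, Separates G (C j) (C (j + 1)) → ¬ Separates G (C k) (C (k + 1))

/-!
Crossing a fixed hyperplane changes sides, so a reduced path from `X` to `Y` crosses exactly the
hyperplanes that separate `X` from `Y`. If appending `B → C` to a reduced path `α` from `A₀` to `B`
destroys reducedness, then the wall `H` between `B` and `C` already separates `A₀` from `B`, hence
does not separate `A₀` from `C`. A reduced path `γ` from `A₀` to `C` therefore does not cross `H`,
and appending `C → B` to it keeps it reduced.

For the existence of `γ`, join a generic point of the first chamber to a point `y` of the last one.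
Scaling the equation of each hyperplane to take the value `1` at `y`, the hyperplane met last on the
way to `y` is the one whose equation has the smallest value at the starting point, and genericity
makes it unique. The chamber just before this crossing is adjacent to the last one, and is separated
from the first by one hyperplane fewer.
-/

section AffineFunctions

theorem zero_mem_uIcc_iff {R : Type*} [Ring R] [LinearOrder R] [IsStrictOrderedRing R] {a b : R} :
    0 ∈ uIcc a b ↔ a * b ≤ 0 := by
  rw [mem_uIcc, mul_nonpos_iff, or_comm, and_comm (a := 0 ≤ a)]

variable {E : Type*}

theorem segment_inter_zeros_nonempty_iff [AddCommGroup E] [Module ℝ E] (g : E →ᵃ[ℝ] ℝ) {x y : E} :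
    (segment ℝ x y ∩ g ⁻¹' {0}).Nonempty ↔ g x * g y ≤ 0 := by
  rw [← image_inter_nonempty_iff, image_segment, segment_eq_uIcc, inter_singleton_nonempty,
    zero_mem_uIcc_iff]

theorem connectedComponentIn_eq_of_segment_subset [AddCommGroup E] [Module ℝ E]
    [TopologicalSpace E] [ContinuousAdd E] [ContinuousSMul ℝ E] {s : Set E} {x y : E}
    (h : segment ℝ x y ⊆ s) : connectedComponentIn s x = connectedComponentIn s y :=
  connectedComponentIn_eq <| (convex_segment x y).isPreconnected.subset_connectedComponentIn
    (left_mem_segment ℝ x y) h (right_mem_segment ℝ x y)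

theorem connectedComponentIn_compl_zeros_eq_iff [AddCommGroup E] [Module ℝ E]
    [TopologicalSpace E] [ContinuousAdd E] [ContinuousSMul ℝ E] (g : E →ᴬ[ℝ] ℝ) {x y : E}
    (hx : g x ≠ 0) (hy : g y ≠ 0) :
    connectedComponentIn (g ⁻¹' {0})ᶜ x = connectedComponentIn (g ⁻¹' {0})ᶜ y ↔
      0 < g x * g y := by
  constructor
  · intro h
    by_contra! hxy
    set K := connectedComponentIn (g ⁻¹' {0})ᶜ x
    have hxK : x ∈ K := mem_connectedComponentIn hx
    have hyK : y ∈ K := h ▸ mem_connectedComponentIn hy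
    have hK : (g '' K).OrdConnected :=
      (isPreconnected_connectedComponentIn.image g g.continuous.continuousOn).ordConnected
    obtain ⟨z, hzK, hz⟩ := hK.uIcc_subset (mem_image_of_mem g hxK) (mem_image_of_mem g hyK)
      (zero_mem_uIcc_iff.2 hxy)
    exact connectedComponentIn_subset _ _ hzK hz
  · intro hxy
    refine connectedComponentIn_eq_of_segment_subset fun z hz hz0 ↦ hxy.not_ge ?_
    exact (segment_inter_zeros_nonempty_iff (g : E →ᵃ[ℝ] ℝ)).1 ⟨z, hz, hz0⟩

theorem dense_setOf_continuousAffineMap_ne [NormedAddCommGroup E] [NormedSpace ℝ E]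
    {F : Type*} [AddCommGroup F] [Module ℝ F] [TopologicalSpace F] {f g : E →ᴬ[ℝ] F}
    (hfg : f ≠ g) : Dense {x | f x ≠ g x} := by
  refine interior_eq_empty_iff_dense_compl.1 (not_nonempty_iff_eq_empty.1 fun hne ↦ hfg ?_)
  exact ContinuousAffineMap.toAffineMap_injective <|
    AffineMap.ext_on (isOpen_interior.affineSpan_eq_top hne) fun _ hx ↦
      interior_subset (s := {x | f x = g x}) hx

theorem exists_mem_injOn_apply [NormedAddCommGroup E] [NormedSpace ℝ E] {F : Type*}
    [AddCommGroup F] [Module ℝ F] [TopologicalSpace F] [T2Space F] {ι : Type*} {S : Set ι}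
    (hS : S.Finite) {g : ι → E →ᴬ[ℝ] F} (hg : InjOn g S) {U : Set E} (hU : IsOpen U)
    (hne : U.Nonempty) : ∃ x ∈ U, InjOn (fun i ↦ g i x) S := by
  have hdense : Dense (⋂₀ ((fun p : ι × ι ↦ {x | g p.1 x ≠ g p.2 x}) '' S.offDiag)) := by
    refine (hS.offDiag.image _).dense_sInter ?_ ?_ <;> rintro _ ⟨p, ⟨hp₁, hp₂, hp⟩, rfl⟩
    · exact isOpen_ne_fun (g p.1).continuous (g p.2).continuous
    · exact dense_setOf_continuousAffineMap_ne (hg.ne hp₁ hp₂ hp)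
  obtain ⟨x, hxU, hx⟩ := hdense.inter_open_nonempty U hU hne
  refine ⟨x, hxU, fun i hi j hj hij ↦ by_contra fun h ↦ ?_⟩
  exact hx _ ⟨(i, j), ⟨hi, hj, h⟩, rfl⟩ hij

theorem apply_lineMap_of_eq_one [AddCommGroup E] [Module ℝ E] (g : E →ᵃ[ℝ] ℝ) {x y : E} {v : ℝ}
    (hy : g y = 1) (hv : v ≠ 1) :
    g (AffineMap.lineMap y x (1 - v)⁻¹) = (g x - v) / (1 - v) := by
  have hv' : 1 - v ≠ 0 := sub_ne_zero.2 hv.symm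
  rw [AffineMap.apply_lineMap, hy, AffineMap.lineMap_apply_ring]
  field_simp
  ring

end AffineFunctions

theorem exists_gap_above_min {ι α : Type*} [LinearOrder α] [DenselyOrdered α] {S : Set ι}
    (hS : S.Finite) (hne : S.Nonempty) {φ : ι → α} (hφ : InjOn φ S) {b : α}
    (hb : ∀ i ∈ S, φ i < b) :
    ∃ i₀ ∈ S, ∃ v, φ i₀ < v ∧ v < b ∧ ∀ i ∈ S, i ≠ i₀ → v < φ i := by
  obtain ⟨i₀, hi₀, hmin⟩ := S.exists_min_image φ hS hne
  obtain ⟨c, hc, hcmin⟩ := (insert b (φ '' (S \ {i₀}))).exists_min_image id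
    ((hS.sdiff.image φ).insert b) (insert_nonempty _ _)
  have hlt : φ i₀ < c := by
    rcases hc with rfl | ⟨i, ⟨hi, hne⟩, rfl⟩
    · exact hb i₀ hi₀
    · exact (hmin i hi).lt_of_ne fun h ↦ hne (hφ hi hi₀ h.symm)
  obtain ⟨v, hv₀, hv⟩ := exists_between hlt
  exact ⟨i₀, hi₀, v, hv₀, hv.trans_le (hcmin b (mem_insert _ _)), fun i hi hne ↦
    hv.trans_le (hcmin _ (mem_insert_of_mem _ ⟨i, ⟨hi, hne⟩, rfl⟩))⟩

section Arrangements

variable {n : ℕ} {A : Set (Set (Fin n → ℝ))} {H C D X Y Z : Set (Fin n → ℝ)}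

theorem IsAffineHyperplane.isClosed (hH : IsAffineHyperplane H) : IsClosed H := by
  obtain ⟨f, c, -, rfl⟩ := hH
  exact isClosed_eq f.continuous_of_finiteDimensional continuous_const

theorem IsAffineHyperplane.exists_normalized_equation (hH : IsAffineHyperplane H)
    {y : Fin n → ℝ} (hy : y ∉ H) :
    ∃ g : (Fin n → ℝ) →ᴬ[ℝ] ℝ, g y = 1 ∧ H = g ⁻¹' {0} := by
  obtain ⟨f, c, -, rfl⟩ := hH
  have hfy : f y - c ≠ 0 := sub_ne_zero.2 hy
  refine ⟨(f y - c)⁻¹ • (f.toContinuousLinearMap.toContinuousAffineMap -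
    ContinuousAffineMap.const ℝ _ c), ?_, ?_⟩
  · simp [hfy]
  · ext x
    simp [hfy, sub_eq_zero]

namespace IsLocallyFiniteArrangement

theorem locallyFinite (hA : IsLocallyFiniteArrangement A) :
    LocallyFinite (fun H : A ↦ (H : Set (Fin n → ℝ))) := by
  intro x
  obtain ⟨U, hU, hfin⟩ := hA.2 x
  refine ⟨U, hU, .of_finite_image (hfin.subset ?_) Subtype.val_injective.injOn⟩
  rintro _ ⟨H, hH, rfl⟩
  exact ⟨H.2, hH⟩

theorem isOpen_compl_sUnion (hA : IsLocallyFiniteArrangement A) : IsOpen (⋃₀ A)ᶜ := by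
  rw [isOpen_compl_iff, sUnion_eq_iUnion]
  exact hA.locallyFinite.isClosed_iUnion fun H ↦ (hA.1 H H.2).isClosed

end IsLocallyFiniteArrangement

namespace IsChamber

theorem nonempty (hC : IsChamber A C) : C.Nonempty := by
  obtain ⟨x, hx, rfl⟩ := hC
  exact ⟨x, mem_connectedComponentIn hx⟩

theorem isPreconnected (hC : IsChamber A C) : IsPreconnected C := by
  obtain ⟨x, -, rfl⟩ := hC
  exact isPreconnected_connectedComponentIn

theorem isOpen (hA : IsLocallyFiniteArrangement A) (hC : IsChamber A C) : IsOpen C := by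
  obtain ⟨x, -, rfl⟩ := hC
  exact hA.isOpen_compl_sUnion.connectedComponentIn

theorem subset_compl (hC : IsChamber A C) (hH : H ∈ A) : C ⊆ Hᶜ := by
  obtain ⟨x, -, rfl⟩ := hC
  exact (connectedComponentIn_subset _ _).trans (compl_subset_compl.2 (subset_sUnion_of_mem hH))

theorem eq_connectedComponentIn (hC : IsChamber A C) {x : Fin n → ℝ} (hx : x ∈ C) :
    C = connectedComponentIn (⋃₀ A)ᶜ x := by
  obtain ⟨x₀, -, rfl⟩ := hC
  exact connectedComponentIn_eq hx

end IsChamber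

theorem Separates.symm (h : Separates H C D) : Separates H D C := fun ⟨x, hx, y, hy, hxy⟩ ↦
  h ⟨y, hy, x, hx, hxy.symm⟩

theorem separates_iff_connectedComponentIn_ne (hC : IsPreconnected C) (hD : IsPreconnected D)
    (hCH : C ⊆ Hᶜ) (hDH : D ⊆ Hᶜ) {x y : Fin n → ℝ} (hx : x ∈ C) (hy : y ∈ D) :
    Separates H C D ↔ connectedComponentIn Hᶜ x ≠ connectedComponentIn Hᶜ y := by
  refine not_congr ⟨?_, fun h ↦ ⟨x, hx, y, hy, h⟩⟩
  rintro ⟨x', hx', y', hy', h⟩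
  rwa [connectedComponentIn_eq (hC.subset_connectedComponentIn hx hCH hx'),
    connectedComponentIn_eq (hD.subset_connectedComponentIn hy hDH hy')]

namespace IsChamber

theorem separates_iff_mul_neg (hC : IsChamber A C) (hD : IsChamber A D) (hH : H ∈ A)
    {g : (Fin n → ℝ) →ᴬ[ℝ] ℝ} (hg : H = g ⁻¹' {0}) {x y : Fin n → ℝ} (hx : x ∈ C) (hy : y ∈ D) :
    Separates H C D ↔ g x * g y < 0 := by
  have hCH := hC.subset_compl hH
  have hDH := hD.subset_compl hH
  subst hg
  have hgx : g x ≠ 0 := hCH hx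
  have hgy : g y ≠ 0 := hDH hy
  rw [separates_iff_connectedComponentIn_ne hC.isPreconnected hD.isPreconnected hCH hDH hx hy,
    ne_eq, connectedComponentIn_compl_zeros_eq_iff g hgx hgy, not_lt,
    (mul_ne_zero hgx hgy).le_iff_lt]

theorem separates_iff_segment_inter_nonempty (hHA : IsAffineHyperplane H) (hC : IsChamber A C)
    (hD : IsChamber A D) (hH : H ∈ A) {x y : Fin n → ℝ} (hx : x ∈ C) (hy : y ∈ D) :
    Separates H C D ↔ (segment ℝ x y ∩ H).Nonempty := by
  have hxH : x ∉ H := hC.subset_compl hH hx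
  have hyH : y ∉ H := hD.subset_compl hH hy
  obtain ⟨g, -, hg⟩ := hHA.exists_normalized_equation hyH
  rw [hC.separates_iff_mul_neg hD hH hg hx hy]
  subst hg
  exact (mul_ne_zero hxH hyH).le_iff_lt.symm.trans
    (segment_inter_zeros_nonempty_iff (g : (Fin n → ℝ) →ᵃ[ℝ] ℝ)).symm

theorem separates_iff_xor (hHA : IsAffineHyperplane H) (hX : IsChamber A X)
    (hY : IsChamber A Y) (hZ : IsChamber A Z) (hH : H ∈ A) :
    Separates H X Z ↔ Xor (Separates H X Y) (Separates H Y Z) := by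
  obtain ⟨x, hx⟩ := hX.nonempty
  obtain ⟨y, hy⟩ := hY.nonempty
  obtain ⟨z, hz⟩ := hZ.nonempty
  have hxH : x ∉ H := hX.subset_compl hH hx
  have hzH : z ∉ H := hZ.subset_compl hH hz
  obtain ⟨g, hgy, hg⟩ := hHA.exists_normalized_equation (hY.subset_compl hH hy)
  rw [hX.separates_iff_mul_neg hZ hH hg hx hz, hX.separates_iff_mul_neg hY hH hg hx hy,
    hY.separates_iff_mul_neg hZ hH hg hy hz, hgy, mul_one, one_mul]
  have hgx : g x ≠ 0 := by rwa [hg] at hxH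
  have hgz : g z ≠ 0 := by rwa [hg] at hzH
  rcases hgx.lt_or_gt with hx | hx <;> rcases hgz.lt_or_gt with hz | hz <;>
    simp [Xor, mul_neg_iff, hx, hz, hx.not_gt, hz.not_gt]

end IsChamber

/-- The hyperplanes of the arrangement `A` that separate `C` from `D`. For chambers, its cardinality
is their distance in the adjacency graph. -/
def separatingSet (A : Set (Set (Fin n → ℝ))) (C D : Set (Fin n → ℝ)) :
    Set (Set (Fin n → ℝ)) :=
  {H | H ∈ A ∧ Separates H C D}

theorem separatingSet_comm (A : Set (Set (Fin n → ℝ))) (C D : Set (Fin n → ℝ)) :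
    separatingSet A C D = separatingSet A D C :=
  Set.ext fun _ ↦ and_congr_right fun _ ↦ ⟨.symm, .symm⟩

theorem adjacent_iff_exists_separatingSet_eq_singleton :
    Adjacent A C D ↔ IsChamber A C ∧ IsChamber A D ∧ ∃ H, separatingSet A C D = {H} := by
  simp only [Adjacent, ExistsUnique, eq_singleton_iff_unique_mem]
  rfl

theorem Adjacent.symm (h : Adjacent A C D) : Adjacent A D C := by
  rw [adjacent_iff_exists_separatingSet_eq_singleton] at h ⊢
  exact ⟨h.2.1, h.1, separatingSet_comm A C D ▸ h.2.2⟩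

namespace IsChamber

theorem separatingSet_self (hC : IsChamber A C) : separatingSet A C C = ∅ := by
  obtain ⟨x, hx⟩ := hC.nonempty
  exact eq_empty_of_forall_notMem fun H hH ↦ hH.2 ⟨x, hx, x, hx, rfl⟩

open scoped symmDiff in
theorem separatingSet_eq_symmDiff (hA : ∀ H ∈ A, IsAffineHyperplane H) (hX : IsChamber A X)
    (hY : IsChamber A Y) (hZ : IsChamber A Z) :
    separatingSet A X Z = separatingSet A X Y ∆ separatingSet A Y Z := by
  ext H
  have hxor (hH : H ∈ A) := hX.separates_iff_xor (hA H hH) hY hZ hH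
  simp only [separatingSet, Set.mem_symmDiff, mem_ofPred_eq]
  grind

theorem finite_separatingSet (hA : IsLocallyFiniteArrangement A) (hC : IsChamber A C)
    (hD : IsChamber A D) : (separatingSet A C D).Finite := by
  obtain ⟨x, hx⟩ := hC.nonempty
  obtain ⟨y, hy⟩ := hD.nonempty
  have hcompact : IsCompact (segment ℝ x y) := by
    rw [segment_eq_image_lineMap]
    exact isCompact_Icc.image AffineMap.lineMap_continuous
  refine ((hA.locallyFinite.finite_nonempty_inter_compact hcompact).image Subtype.val).subset ?_
  rintro H ⟨hH, hsep⟩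
  refine ⟨⟨H, hH⟩, ?_, rfl⟩
  rw [separates_iff_segment_inter_nonempty (hA.1 H hH) hC hD hH hx hy] at hsep
  rwa [mem_ofPred_eq, inter_comm]

theorem eq_of_separatingSet_eq_empty (hA : ∀ H ∈ A, IsAffineHyperplane H) (hC : IsChamber A C)
    (hD : IsChamber A D) (h : separatingSet A C D = ∅) : C = D := by
  obtain ⟨x, hx⟩ := hC.nonempty
  obtain ⟨y, hy⟩ := hD.nonempty
  rw [hC.eq_connectedComponentIn hx, hD.eq_connectedComponentIn hy]
  refine connectedComponentIn_eq_of_segment_subset ?_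
  rintro z hz ⟨H, hH, hzH⟩
  exact h.subset
    ⟨hH, (separates_iff_segment_inter_nonempty (hA H hH) hC hD hH hx hy).2 ⟨z, hz, hzH⟩⟩

theorem exists_isChamber_separates_iff_lt (hY : IsChamber A Y) {x y : Fin n → ℝ} (hy : y ∈ Y)
    {g : Set (Fin n → ℝ) → (Fin n → ℝ) →ᴬ[ℝ] ℝ} (hgy : ∀ H ∈ A, g H y = 1)
    (hg : ∀ H ∈ A, H = g H ⁻¹' {0}) {v : ℝ} (hv : v < 1) (hne : ∀ H ∈ A, g H x ≠ v) :
    ∃ Z, IsChamber A Z ∧ ∀ H ∈ A, (Separates H Z Y ↔ g H x < v) := by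
  -- an equation with value `v` at `x` would vanish at `z`
  set z := AffineMap.lineMap y x (1 - v)⁻¹
  have hpos : 0 < 1 - v := sub_pos.2 hv
  have hz (H) (hH : H ∈ A) : g H z = (g H x - v) / (1 - v) :=
    apply_lineMap_of_eq_one (g H : (Fin n → ℝ) →ᵃ[ℝ] ℝ) (hgy H hH) hv.ne
  have hzA : z ∈ (⋃₀ A)ᶜ := by
    rintro ⟨H, hH, hzH⟩
    rw [hg H hH, mem_preimage, mem_singleton_iff, hz H hH] at hzH
    exact div_ne_zero (sub_ne_zero.2 (hne H hH)) hpos.ne' hzH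
  have hZ : IsChamber A (connectedComponentIn (⋃₀ A)ᶜ z) := ⟨z, hzA, rfl⟩
  refine ⟨_, hZ, fun H hH ↦ ?_⟩
  rw [hZ.separates_iff_mul_neg hY hH (hg H hH) (mem_connectedComponentIn hzA) hy, hgy H hH,
    mul_one, hz H hH, div_lt_iff₀ hpos, zero_mul, sub_neg]

theorem exists_separatingSet_eq_singleton (hA : IsLocallyFiniteArrangement A)
    (hX : IsChamber A X) (hY : IsChamber A Y) (hne : (separatingSet A X Y).Nonempty) :
    ∃ Z, IsChamber A Z ∧ ∃ H ∈ separatingSet A X Y, separatingSet A Z Y = {H} := by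
  obtain ⟨y, hy⟩ := hY.nonempty
  choose! g hgy hg using fun H (hH : H ∈ A) ↦
    (hA.1 H hH).exists_normalized_equation (hY.subset_compl hH hy)
  have hfin := hX.finite_separatingSet hA hY
  have hinj : InjOn g (separatingSet A X Y) := fun H hH K hK h ↦ by
    rw [hg H hH.1, hg K hK.1, h]
  obtain ⟨x, hx, hxinj⟩ := exists_mem_injOn_apply hfin hinj (hX.isOpen hA) hX.nonempty
  have hsep (H) (hH : H ∈ A) : Separates H X Y ↔ g H x < 0 := by
    rw [hX.separates_iff_mul_neg hY hH (hg H hH) hx hy, hgy H hH, mul_one]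
  obtain ⟨H₀, hH₀, v, hv₀, hv, hvlt⟩ := exists_gap_above_min hfin hne hxinj
    fun H hH ↦ (hsep H hH.1).1 hH.2
  have hlt (H) (hH : H ∈ A) (hHne : H ≠ H₀) : v < g H x := by
    by_cases hHS : H ∈ separatingSet A X Y
    · exact hvlt H hHS hHne
    · exact hv.trans_le (not_lt.1 fun h ↦ hHS ⟨hH, (hsep H hH).2 h⟩)
  have hnev (H) (hH : H ∈ A) : g H x ≠ v := by
    obtain rfl | hHne := eq_or_ne H H₀
    exacts [hv₀.ne, (hlt H hH hHne).ne']
  obtain ⟨Z, hZ, hZY⟩ :=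
    hY.exists_isChamber_separates_iff_lt hy hgy hg (hv.trans one_pos) hnev
  refine ⟨Z, hZ, H₀, hH₀, Set.ext fun H ↦ ⟨fun ⟨hH, h⟩ ↦ ?_, ?_⟩⟩
  · exact by_contra fun hHne ↦ ((hZY H hH).1 h).not_gt (hlt H hH hHne)
  · rintro rfl
    exact ⟨hH₀.1, (hZY H hH₀.1).2 hv₀⟩

end IsChamber

namespace IsReducedPath

variable {s t : ℕ} {P Q : ℕ → Set (Fin n → ℝ)}

theorem congr (hP : IsReducedPath A t P) (h : ∀ j ≤ t, P j = Q j) : IsReducedPath A t Q := by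
  have hQ : ∀ j < t, P j = Q j ∧ P (j + 1) = Q (j + 1) := fun j hj ↦ ⟨h j hj.le, h (j + 1) hj⟩
  obtain ⟨⟨hcham, hadj⟩, hred⟩ := hP
  refine ⟨⟨fun j hj ↦ h j hj ▸ hcham j hj, fun j hj ↦ ?_⟩, fun j k hj hk ↦ ?_⟩
  · rw [← (hQ j hj).1, ← (hQ j hj).2]
    exact hadj j hj
  · rw [← (hQ j hj).1, ← (hQ j hj).2, ← (hQ k hk).1, ← (hQ k hk).2]
    exact hred j k hj hk

theorem mono (hP : IsReducedPath A t P) (hst : s ≤ t) : IsReducedPath A s P :=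
  ⟨⟨fun j hj ↦ hP.1.1 j (hj.trans hst), fun j hj ↦ hP.1.2 j (hj.trans_le hst)⟩,
    fun j k hj hk ↦ hP.2 j k (hj.trans_le hst) (hk.trans_le hst)⟩

theorem mem_separatingSet_iff (hA : ∀ H ∈ A, IsAffineHyperplane H) (hP : IsReducedPath A t P) :
    H ∈ separatingSet A (P 0) (P t) ↔ ∃ j < t, H ∈ separatingSet A (P j) (P (j + 1)) := by
  induction t with
  | zero => simp [(hP.1.1 0 le_rfl).separatingSet_self]
  | succ t ih =>
    rw [(hP.1.1 0 (by lia)).separatingSet_eq_symmDiff hA (hP.1.1 t (by lia)) (hP.1.1 _ le_rfl),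
      Set.mem_symmDiff, ih (hP.mono t.le_succ), Nat.exists_lt_succ_right]
    have honce : ∀ j < t, H ∈ separatingSet A (P j) (P (j + 1)) →
        H ∉ separatingSet A (P t) (P (t + 1)) := fun j hj h h' ↦
      hP.2 j t (by lia) (by lia) hj.ne H h.1 h.2 h'.2
    grind

theorem succ (hA : ∀ H ∈ A, IsAffineHyperplane H) (hP : IsReducedPath A t P)
    (hadj : Adjacent A (P t) (P (t + 1)))
    (hdisj : Disjoint (separatingSet A (P 0) (P t)) (separatingSet A (P t) (P (t + 1)))) :
    IsReducedPath A (t + 1) P := by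
  have hlast (j) (hj : j < t) (H) (hH : H ∈ A) (h : Separates H (P j) (P (j + 1))) :
      ¬ Separates H (P t) (P (t + 1)) := fun h' ↦
    hdisj.notMem_of_mem_left ((hP.mem_separatingSet_iff hA).2 ⟨j, hj, hH, h⟩) ⟨hH, h'⟩
  refine ⟨⟨fun j hj ↦ ?_, fun j hj ↦ ?_⟩, fun j k hj hk hjk H hH h h' ↦ ?_⟩
  · obtain hj | rfl := Nat.le_succ_iff.1 hj
    exacts [hP.1.1 j hj, hadj.2.1]
  · obtain hj | rfl := Nat.lt_succ_iff_lt_or_eq.1 hj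
    exacts [hP.1.2 j hj, hadj]
  · obtain hj | rfl := Nat.lt_succ_iff_lt_or_eq.1 hj <;>
      obtain hk | rfl := Nat.lt_succ_iff_lt_or_eq.1 hk
    exacts [hP.2 j k hj hk hjk H hH h h', hlast j hj H hH h h', hlast k hk H hH h' h, hjk rfl]

end IsReducedPath

/-- The path `P 0, …, P t` with one further step to `Y`; beyond its end it stays at `Y`. -/
def extendPath {α : Type*} (t : ℕ) (P : ℕ → α) (Y : α) : ℕ → α := fun j ↦ if j ≤ t then P j else Y

section ExtendPath

variable {α : Type*} {t j : ℕ} {P : ℕ → α} {Y : α}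

theorem extendPath_of_le (h : j ≤ t) : extendPath t P Y j = P j := if_pos h

@[simp]
theorem extendPath_succ : extendPath t P Y (t + 1) = Y := if_neg (Nat.not_succ_le_self t)

end ExtendPath

theorem IsReducedPath.extendPath {t : ℕ} {P : ℕ → Set (Fin n → ℝ)}
    (hA : ∀ H ∈ A, IsAffineHyperplane H) (hP : IsReducedPath A t P) (hadj : Adjacent A (P t) Y)
    (hdisj : Disjoint (separatingSet A (P 0) (P t)) (separatingSet A (P t) Y)) :
    IsReducedPath A (t + 1) (extendPath t P Y) := by
  refine (hP.congr fun j hj ↦ (extendPath_of_le hj).symm).succ hA ?_ ?_ <;>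
    simpa [extendPath_of_le]

theorem IsChamber.exists_isReducedPath (hA : IsLocallyFiniteArrangement A) (hX : IsChamber A X)
    (hY : IsChamber A Y) : ∃ t P, P 0 = X ∧ P t = Y ∧ IsReducedPath A t P := by
  induction hm : (separatingSet A X Y).ncard generalizing Y with
  | zero =>
    obtain rfl : X = Y := hX.eq_of_separatingSet_eq_empty hA.1 hY
      ((ncard_eq_zero (hX.finite_separatingSet hA hY)).1 hm)
    exact ⟨0, fun _ ↦ X, rfl, rfl, ⟨fun _ _ ↦ hX, by simp⟩, by simp⟩
  | succ m ih =>
    obtain ⟨Z, hZ, H, hH, hZY⟩ := hX.exists_separatingSet_eq_singleton hA hY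
      (nonempty_of_ncard_ne_zero (by lia))
    have hXZ : separatingSet A X Z = separatingSet A X Y \ {H} := by
      rw [hX.separatingSet_eq_symmDiff hA.1 hY hZ, separatingSet_comm A Y Z, hZY,
        symmDiff_of_ge (singleton_subset_iff.2 hH)]
    have hcard : (separatingSet A X Z).ncard = m := by
      rw [hXZ, ncard_sdiff_singleton_of_mem hH, hm, Nat.add_sub_cancel]
    obtain ⟨t, P, rfl, rfl, hP⟩ := ih hZ hcard
    refine ⟨t + 1, extendPath t P Y, extendPath_of_le t.zero_le, extendPath_succ,
      hP.extendPath hA.1 ?_ ?_⟩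
    · exact adjacent_iff_exists_separatingSet_eq_singleton.2 ⟨hZ, hY, H, hZY⟩
    · rw [hXZ, hZY]
      exact disjoint_sdiff_left

end Arrangements

/-- Let `𝓐` be a locally finite hyperplane arrangement in `ℝ^n`, let
`α : A₀ = C 0 → C 1 → ⋯ → C t = B` be a reduced positive path between chambers, and let `Cc`
be a chamber adjacent to `B = C t`.  If the positive path from `A₀` to `Cc` obtained by
appending to `α` the step `B → Cc` is not reduced, then there exists a reduced positive path
`γ` from `A₀` to `Cc` such that the positive path from `A₀` to `B` obtained by appending to
`γ` the step `Cc → B` is reduced. -/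
theorem exists_reduced_path_after_nonreduced_extension
    {n : ℕ} (A : Set (Set (Fin n → ℝ))) (hA : IsLocallyFiniteArrangement A)
    (t : ℕ) (C : ℕ → Set (Fin n → ℝ)) (hα : IsReducedPath A t C)
    (Cc : Set (Fin n → ℝ)) (hadj : Adjacent A (C t) Cc)
    (hnotred : ¬ IsReducedPath A (t + 1) (fun j => if j ≤ t then C j else Cc)) :
    ∃ (s : ℕ) (E : ℕ → Set (Fin n → ℝ)),
      E 0 = C 0 ∧ E s = Cc ∧ E (s + 1) = C t ∧
      IsReducedPath A s E ∧ IsReducedPath A (s + 1) E := by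
  obtain ⟨hB, hCc, H, hH⟩ := adjacent_iff_exists_separatingSet_eq_singleton.1 hadj
  have hC₀ : IsChamber A (C 0) := hα.1.1 0 t.zero_le
  have hH₀ : H ∈ separatingSet A (C 0) (C t) := by
    by_contra hH₀
    refine hnotred (hα.extendPath hA.1 hadj ?_)
    rwa [hH, disjoint_singleton_right]
  have hHc : H ∉ separatingSet A (C 0) Cc := by
    rw [hC₀.separatingSet_eq_symmDiff hA.1 hB hCc, hH, symmDiff_of_ge (singleton_subset_iff.2 hH₀)]
    exact notMem_sdiff_of_mem rfl
  obtain ⟨s, E, hE₀, rfl, hE⟩ := hC₀.exists_isReducedPath hA hCc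
  have hE' : IsReducedPath A (s + 1) (extendPath s E (C t)) := by
    refine hE.extendPath hA.1 hadj.symm ?_
    rwa [hE₀, separatingSet_comm A (E s), hH, disjoint_singleton_right]
  exact ⟨s, extendPath s E (C t), (extendPath_of_le s.zero_le).trans hE₀, extendPath_of_le le_rfl,
    extendPath_succ, hE'.mono s.le_succ, hE'⟩
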